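/- The map a ↦ S_a = {(i, a(i)) : i = 1,…,n} is a bijection from the set of truth assignments satisfying the CNF formula φ onto the set of faces of Δ of cardinality n; in particular, the number of n-element faces of Δ equals the number of satisfying truth assignments of φ. -/

import Mathlib

/-- For a clause `C` (a finite set of literals `(j,b)`), the circuit
`C' = {(j, ¬b) : (j,b) ∈ C}`. -/
def clauseDual {n : ℕ} (C : Finset (Fin n × Bool)) : Finset (Fin n × Bool) :=
  C.image (fun l => (l.1, !l.2))

/-- The circuit `P i = {t_i, f_i}`. -/
def pairCircuit {n : ℕ} (i : Fin n) : Finset (Fin n × Bool) :=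
  {(i, true), (i, false)}

/-- `S` is a face of the complex `Δ` associated with the CNF formula `φ`:
it contains none of the circuits `C₁', …, C_m', P₁, …, P_n`. -/
def IsFace {n m : ℕ} (φ : Fin m → Finset (Fin n × Bool)) (S : Finset (Fin n × Bool)) : Prop :=
  (∀ k, ¬ clauseDual (φ k) ⊆ S) ∧ (∀ i, ¬ pairCircuit i ⊆ S)

/-- The set `S_a = {(i, a i) : i}` associated with a truth assignment `a`. -/
def assignFace {n : ℕ} (a : Fin n → Bool) : Finset (Fin n × Bool) :=
  Finset.univ.image (fun i => (i, a i))

/-- The assignment `a` satisfies the clause `C`. -/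
def SatisfiesClause {n : ℕ} (a : Fin n → Bool) (C : Finset (Fin n × Bool)) : Prop :=
  ∃ l ∈ C, a l.1 = l.2

/-- The assignment `a` satisfies every clause of the CNF formula `φ`. -/
def Satisfies {n m : ℕ} (φ : Fin m → Finset (Fin n × Bool)) (a : Fin n → Bool) : Prop :=
  ∀ k, SatisfiesClause a (φ k)

/-!
Avoiding the pairs `P_i` means that the projection `(i, b) ↦ i` is injective on `S`. If moreover
`S` has `n` elements, the projection is a bijection onto the variables, so `S` is the graph of a
unique truth assignment `a`; and that graph contains the circuit `C'` exactly when `a` makes every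
literal of `C` false.
-/

theorem exists_coe_eq_graphOn_univ {α β : Type*} [Fintype α] {S : Finset (α × β)}
    (hinj : Set.InjOn Prod.fst (S : Set (α × β))) (hcard : S.card = Fintype.card α) :
    ∃ f : α → β, (S : Set (α × β)) = Set.univ.graphOn f := by
  refine Set.exists_eq_mgraphOn_univ ?_
  exact (Fintype.bijective_iff_injective_and_card _).2 ⟨hinj.injective, by simp [hcard]⟩

section Literals

variable {n m : ℕ}

theorem coe_assignFace (a : Fin n → Bool) :
    (assignFace a : Set (Fin n × Bool)) = Set.univ.graphOn a := by
  simp [assignFace, Set.graphOn_univ_eq_range]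

theorem mem_assignFace {a : Fin n → Bool} {l : Fin n × Bool} :
    l ∈ assignFace a ↔ a l.1 = l.2 := by
  simp [← Finset.mem_coe, coe_assignFace]

theorem card_assignFace (a : Fin n → Bool) : (assignFace a).card = n := by
  rw [← Set.ncard_coe_finset, coe_assignFace, Set.ncard_graphOn, Set.ncard_univ, Nat.card_fin]

theorem injOn_fst_assignFace (a : Fin n → Bool) :
    Set.InjOn Prod.fst (assignFace a : Set (Fin n × Bool)) := by
  rw [coe_assignFace]
  exact Set.fst_injOn_graph

theorem assignFace_injective : Function.Injective (assignFace (n := n)) := by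
  intro a b hab
  rw [← Set.graphOn_univ_inj, ← coe_assignFace, ← coe_assignFace, hab]

theorem bijOn_assignFace_univ :
    Set.BijOn assignFace Set.univ
      {S : Finset (Fin n × Bool) | Set.InjOn Prod.fst (S : Set (Fin n × Bool)) ∧ S.card = n} := by
  refine ⟨fun a _ => ⟨injOn_fst_assignFace a, card_assignFace a⟩, assignFace_injective.injOn, ?_⟩
  rintro S ⟨hinj, hcard⟩
  obtain ⟨a, ha⟩ := exists_coe_eq_graphOn_univ hinj (hcard.trans (Fintype.card_fin n).symm)
  exact ⟨a, Set.mem_univ a, Finset.coe_injective ((coe_assignFace a).trans ha.symm)⟩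

theorem forall_not_pairCircuit_subset_iff {S : Finset (Fin n × Bool)} :
    (∀ i, ¬ pairCircuit i ⊆ S) ↔ Set.InjOn Prod.fst (S : Set (Fin n × Bool)) := by
  simp only [pairCircuit, Finset.insert_subset_iff, Finset.singleton_subset_iff]
  constructor
  · rintro hS ⟨i, b⟩ hb ⟨j, c⟩ hc (rfl : i = j)
    cases b <;> cases c
    · rfl
    · exact absurd ⟨hc, hb⟩ (hS i)
    · exact absurd ⟨hb, hc⟩ (hS i)
    · rfl
  · rintro hinj i ⟨ht, hf⟩
    simpa using hinj ht hf rfl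

theorem clauseDual_subset_assignFace_iff {a : Fin n → Bool} {C : Finset (Fin n × Bool)} :
    clauseDual C ⊆ assignFace a ↔ ¬ SatisfiesClause a C := by
  simp only [clauseDual, SatisfiesClause, Finset.image_subset_iff, mem_assignFace,
    Bool.eq_not, not_exists, not_and, ne_eq]

theorem isFace_assignFace_iff {φ : Fin m → Finset (Fin n × Bool)} {a : Fin n → Bool} :
    IsFace φ (assignFace a) ↔ Satisfies φ a := by
  simp only [IsFace, Satisfies, clauseDual_subset_assignFace_iff, not_not,
    forall_not_pairCircuit_subset_iff, injOn_fst_assignFace, and_true]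

end Literals

theorem assignFace_bijOn_and_card {n m : ℕ} (φ : Fin m → Finset (Fin n × Bool)) :
    Set.BijOn assignFace {a : Fin n → Bool | Satisfies φ a}
      {S : Finset (Fin n × Bool) | IsFace φ S ∧ S.card = n} ∧
    Nat.card {S : Finset (Fin n × Bool) // IsFace φ S ∧ S.card = n} =
      Nat.card {a : Fin n → Bool // Satisfies φ a} := by
  have hbij : Set.BijOn assignFace {a : Fin n → Bool | Satisfies φ a}
      {S : Finset (Fin n × Bool) | IsFace φ S ∧ S.card = n} := by
    have hsub : {S : Finset (Fin n × Bool) | IsFace φ S ∧ S.card = n} ⊆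
        {S | Set.InjOn Prod.fst (S : Set (Fin n × Bool)) ∧ S.card = n} :=
      fun S hS => ⟨forall_not_pairCircuit_subset_iff.1 hS.1.2, hS.2⟩
    simpa [isFace_assignFace_iff, card_assignFace] using bijOn_assignFace_univ.subset_right hsub
  exact ⟨hbij, (Nat.card_congr (hbij.equiv assignFace)).symm⟩
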